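/- Let T_1 ≤ SL_3(F_2) be the subgroup of matrices g with g_{21} = g_{31} = 0, let T_2 ≤ SL_3(F_2) be the subgroup of matrices g with g_{31} = g_{32} = 0, and let T_0 = T_1 ∩ T_2 (the upper-triangular matrices). Suppose μ_1 : T_1 → SL_3(ℤ_2) and μ_2 : T_2 → SL_3(ℤ_2) are group homomorphisms with π ∘ μ_1 and π ∘ μ_2 equal to the respective inclusions, and with μ_1|_{T_0} = μ_2|_{T_0}. Then there exist a group homomorphism μ : SL_3(F_2) → SL_3(ℤ_2) with π ∘ μ = id, and an element Z ∈ SL_3(ℤ_2) commuting with every element of μ_1(T_0), such that μ|_{T_1} = μ_1 and μ(g) = Z·μ_2(g)·Z^{-1} for all g ∈ T_2. -/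

import Mathlib

open Matrix

/-- `SL₃(𝔽₂)`. -/
abbrev SL3F2 := Matrix.SpecialLinearGroup (Fin 3) (ZMod 2)

/-- `SL₃(ℤ₂)`, where `ℤ₂` is the ring of `2`-adic integers. -/
abbrev SL3Z2 := Matrix.SpecialLinearGroup (Fin 3) ℤ_[2]

/-- Entrywise reduction modulo `2`, as a group homomorphism `SL₃(ℤ₂) → SL₃(𝔽₂)`. -/
noncomputable def redMod2 : SL3Z2 →* SL3F2 :=
  Matrix.SpecialLinearGroup.map (PadicInt.toZMod (p := 2))

/-- The maximal parabolic subgroup `T₁ ≤ SL₃(𝔽₂)` of matrices `g` with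
`g₂₁ = g₃₁ = 0` (one-based indexing). -/
def T1 : Subgroup SL3F2 where
  carrier := {g | (g : Matrix (Fin 3) (Fin 3) (ZMod 2)) 1 0 = 0 ∧
    (g : Matrix (Fin 3) (Fin 3) (ZMod 2)) 2 0 = 0}
  one_mem' := by
    constructor <;> simp [Matrix.one_apply]
  mul_mem' := by
    rintro a b ⟨ha1, ha2⟩ ⟨hb1, hb2⟩
    constructor <;>
      rw [Matrix.SpecialLinearGroup.coe_mul, Matrix.mul_apply, Fin.sum_univ_three]
    · rw [ha1, hb1, hb2]; ring
    · rw [ha2, hb1, hb2]; ring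
  inv_mem' := by
    rintro g ⟨h1, h2⟩
    have hdet : (g : Matrix (Fin 3) (Fin 3) (ZMod 2)).det = 1 := g.2
    have hg00 : (g : Matrix (Fin 3) (Fin 3) (ZMod 2)) 0 0 ≠ 0 := by
      intro h0
      rw [Matrix.det_fin_three, h0, h1, h2] at hdet
      simp at hdet
    have hmul : ((g⁻¹ : SL3F2) : Matrix (Fin 3) (Fin 3) (ZMod 2)) *
        (g : Matrix (Fin 3) (Fin 3) (ZMod 2)) = 1 := by
      rw [← Matrix.SpecialLinearGroup.coe_mul, inv_mul_cancel,
        Matrix.SpecialLinearGroup.coe_one]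
    constructor
    · have e1 : (((g⁻¹ : SL3F2) : Matrix (Fin 3) (Fin 3) (ZMod 2)) *
          (g : Matrix (Fin 3) (Fin 3) (ZMod 2))) 1 0 = 0 := by
        rw [hmul]; simp [Matrix.one_apply]
      rw [Matrix.mul_apply, Fin.sum_univ_three, h1, h2] at e1
      simp only [mul_zero, add_zero] at e1
      rcases mul_eq_zero.mp e1 with h | h
      · exact h
      · exact absurd h hg00
    · have e2 : (((g⁻¹ : SL3F2) : Matrix (Fin 3) (Fin 3) (ZMod 2)) *
          (g : Matrix (Fin 3) (Fin 3) (ZMod 2))) 2 0 = 0 := by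
        rw [hmul]; simp [Matrix.one_apply]
      rw [Matrix.mul_apply, Fin.sum_univ_three, h1, h2] at e2
      simp only [mul_zero, add_zero] at e2
      rcases mul_eq_zero.mp e2 with h | h
      · exact h
      · exact absurd h hg00

/-- The maximal parabolic subgroup `T₂ ≤ SL₃(𝔽₂)` of matrices `g` with
`g₃₁ = g₃₂ = 0` (one-based indexing). -/
def T2 : Subgroup SL3F2 where
  carrier := {g | (g : Matrix (Fin 3) (Fin 3) (ZMod 2)) 2 0 = 0 ∧
    (g : Matrix (Fin 3) (Fin 3) (ZMod 2)) 2 1 = 0}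
  one_mem' := by
    constructor <;> simp [Matrix.one_apply]
  mul_mem' := by
    rintro a b ⟨ha1, ha2⟩ ⟨hb1, hb2⟩
    constructor <;>
      rw [Matrix.SpecialLinearGroup.coe_mul, Matrix.mul_apply, Fin.sum_univ_three]
    · rw [ha1, ha2, hb1]; ring
    · rw [ha1, ha2, hb2]; ring
  inv_mem' := by
    rintro g ⟨h1, h2⟩
    have hdet : (g : Matrix (Fin 3) (Fin 3) (ZMod 2)).det = 1 := g.2
    have hg22 : (g : Matrix (Fin 3) (Fin 3) (ZMod 2)) 2 2 ≠ 0 := by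
      intro h0
      rw [Matrix.det_fin_three, h0, h1, h2] at hdet
      simp at hdet
    have hmul : (g : Matrix (Fin 3) (Fin 3) (ZMod 2)) *
        ((g⁻¹ : SL3F2) : Matrix (Fin 3) (Fin 3) (ZMod 2)) = 1 := by
      rw [← Matrix.SpecialLinearGroup.coe_mul, mul_inv_cancel,
        Matrix.SpecialLinearGroup.coe_one]
    constructor
    · have e1 : ((g : Matrix (Fin 3) (Fin 3) (ZMod 2)) *
          ((g⁻¹ : SL3F2) : Matrix (Fin 3) (Fin 3) (ZMod 2))) 2 0 = 0 := by
        rw [hmul]; simp [Matrix.one_apply]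
      rw [Matrix.mul_apply, Fin.sum_univ_three, h1, h2] at e1
      simp only [zero_mul, zero_add] at e1
      rcases mul_eq_zero.mp e1 with h | h
      · exact absurd h hg22
      · exact h
    · have e2 : ((g : Matrix (Fin 3) (Fin 3) (ZMod 2)) *
          ((g⁻¹ : SL3F2) : Matrix (Fin 3) (Fin 3) (ZMod 2))) 2 1 = 0 := by
        rw [hmul]; simp [Matrix.one_apply]
      rw [Matrix.mul_apply, Fin.sum_univ_three, h1, h2] at e2
      simp only [zero_mul, zero_add] at e2
      rcases mul_eq_zero.mp e2 with h | h
      · exact absurd h hg22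
      · exact h

/-- Computable model of `ℤ[α]`, `α² = -α - 2`: the pair `(x, y)` stands for `x + y α`. -/
structure QO where
  x : Int
  y : Int
deriving DecidableEq

def QO.add (a b : QO) : QO := ⟨Int.add a.x b.x, Int.add a.y b.y⟩
def QO.mul (a b : QO) : QO :=
  ⟨Int.sub (Int.mul a.x b.x) (Int.mul 2 (Int.mul a.y b.y)),
   Int.sub (Int.add (Int.mul a.x b.y) (Int.mul a.y b.x)) (Int.mul a.y b.y)⟩

/-- Computable 3×3 matrices, entries in row-major order. -/
structure M9 (R : Type) where
  a : R
  b : R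
  c : R
  d : R
  e : R
  f : R
  g : R
  h : R
  i : R
deriving DecidableEq

/-- Matrix multiplication with explicit operations. -/
def M9.mul {R : Type} (pl ti : R → R → R) (m n : M9 R) : M9 R :=
  ⟨pl (pl (ti m.a n.a) (ti m.b n.d)) (ti m.c n.g),
   pl (pl (ti m.a n.b) (ti m.b n.e)) (ti m.c n.h),
   pl (pl (ti m.a n.c) (ti m.b n.f)) (ti m.c n.i),
   pl (pl (ti m.d n.a) (ti m.e n.d)) (ti m.f n.g),
   pl (pl (ti m.d n.b) (ti m.e n.e)) (ti m.f n.h),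
   pl (pl (ti m.d n.c) (ti m.e n.f)) (ti m.f n.i),
   pl (pl (ti m.g n.a) (ti m.h n.d)) (ti m.i n.g),
   pl (pl (ti m.g n.b) (ti m.h n.e)) (ti m.i n.h),
   pl (pl (ti m.g n.c) (ti m.h n.f)) (ti m.i n.i)⟩

abbrev mulO : M9 QO → M9 QO → M9 QO := M9.mul QO.add QO.mul
abbrev mulB : M9 Bool → M9 Bool → M9 Bool := M9.mul xor and

/-- Iterated left multiplication. -/
def M9.it {R : Type} (mu : M9 R → M9 R → M9 R) (m : M9 R) : Nat → M9 R → M9 R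
  | 0, n => n
  | k + 1, n => mu m (M9.it mu m k n)

def oneB : M9 Bool := ⟨true, false, false, false, true, false, false, false, true⟩
def sB : M9 Bool := ⟨false, false, true, true, false, true, false, true, false⟩
def dB : M9 Bool := ⟨false, false, true, false, true, false, true, false, false⟩
def cB : M9 Bool := ⟨true, false, false, false, false, true, false, true, true⟩
def u12B : M9 Bool := ⟨true, true, false, false, true, false, false, false, true⟩
def u13B : M9 Bool := ⟨true, false, true, false, true, false, false, false, true⟩
def u23B : M9 Bool := ⟨true, false, false, false, true, true, false, false, true⟩

def oneO : M9 QO := ⟨⟨1, 0⟩, ⟨0, 0⟩, ⟨0, 0⟩, ⟨0, 0⟩, ⟨1, 0⟩, ⟨0, 0⟩, ⟨0, 0⟩, ⟨0, 0⟩, ⟨1, 0⟩⟩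
def sO : M9 QO := ⟨⟨0, 0⟩, ⟨0, 0⟩, ⟨1, 0⟩, ⟨1, 0⟩, ⟨0, 0⟩, ⟨1, 1⟩, ⟨0, 0⟩, ⟨1, 0⟩, ⟨0, 1⟩⟩
def dO : M9 QO := ⟨⟨0, 0⟩, ⟨0, 0⟩, ⟨1, 0⟩, ⟨0, 0⟩, ⟨-1, 0⟩, ⟨0, 0⟩, ⟨1, 0⟩, ⟨0, 0⟩, ⟨0, 0⟩⟩
def cO : M9 QO :=
  ⟨⟨-1, 1⟩, ⟨-2, -1⟩, ⟨0, -1⟩, ⟨-2, -1⟩, ⟨0, -2⟩, ⟨3, 0⟩, ⟨0, 0⟩, ⟨1, 0⟩, ⟨1, 1⟩⟩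
def u12O : M9 QO :=
  ⟨⟨-1, -1⟩, ⟨1, 0⟩, ⟨0, 0⟩, ⟨2, -1⟩, ⟨1, 1⟩, ⟨0, 0⟩, ⟨2, 1⟩, ⟨0, 1⟩, ⟨-1, 0⟩⟩
def u13O : M9 QO :=
  ⟨⟨-1, 1⟩, ⟨-2, -1⟩, ⟨1, -1⟩, ⟨-2, -1⟩, ⟨1, -1⟩, ⟨2, 2⟩, ⟨0, 0⟩, ⟨0, 0⟩, ⟨-1, 0⟩⟩
def u23O : M9 QO :=
  ⟨⟨1, -1⟩, ⟨2, 1⟩, ⟨0, 1⟩, ⟨2, 1⟩, ⟨-1, 1⟩, ⟨-1, 0⟩, ⟨0, 0⟩, ⟨0, 0⟩, ⟨-1, 0⟩⟩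

/-- discrete logarithm with respect to the Singer cycle, read off the first column -/
def logS (g : M9 Bool) : Nat :=
  match g.a, g.d, g.g with
  | true, false, false => 0
  | false, true, false => 1
  | false, false, true => 2
  | true, true, false => 3
  | false, true, true => 4
  | true, true, true => 5
  | true, false, true => 6
  | false, false, false => 0

def logC (g : M9 Bool) : Nat :=
  match g.e, g.h with
  | true, false => 0
  | false, true => 1
  | true, true => 2
  | false, false => 0

/-- `s^i c^j u23^z u12^x u13^y` where the exponents are read off `g` -/
def comb {R : Type} (mu : M9 R → M9 R → M9 R) (o s c u12 u13 u23 : M9 R) (g : M9 Bool) : M9 R :=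
  let g1 := M9.it mulB sB (7 - logS g) g
  let g2 := M9.it mulB cB (3 - logC g1) g1
  M9.it mu s (logS g) (M9.it mu c (logC g1) (M9.it mu u23 g2.f.toNat
    (M9.it mu u12 g2.b.toNat (M9.it mu u13 g2.c.toNat o))))

def lift9 (g : M9 Bool) : M9 QO := comb mulO oneO sO cO u12O u13O u23O g

def redO (q : QO) : Bool := Int.emod q.x 2 == 1
def M9.map {R S : Type} (φ : R → S) (m : M9 R) : M9 S :=
  ⟨φ m.a, φ m.b, φ m.c, φ m.d, φ m.e, φ m.f, φ m.g, φ m.h, φ m.i⟩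

def detB (g : M9 Bool) : Bool :=
  xor (xor (g.a && xor (g.e && g.i) (g.f && g.h)) (g.b && xor (g.d && g.i) (g.f && g.g)))
    (g.c && xor (g.d && g.h) (g.e && g.g))

theorem check_all : ∀ a b c d e f g h i : Bool, detB ⟨a, b, c, d, e, f, g, h, i⟩ = true →
    lift9 (mulB sB ⟨a, b, c, d, e, f, g, h, i⟩) = mulO sO (lift9 ⟨a, b, c, d, e, f, g, h, i⟩) ∧
    lift9 (mulB dB ⟨a, b, c, d, e, f, g, h, i⟩) = mulO dO (lift9 ⟨a, b, c, d, e, f, g, h, i⟩) ∧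
    M9.map redO (lift9 ⟨a, b, c, d, e, f, g, h, i⟩) = ⟨a, b, c, d, e, f, g, h, i⟩ ∧
    comb mulB oneB sB cB u12B u13B u23B ⟨a, b, c, d, e, f, g, h, i⟩ =
      ⟨a, b, c, d, e, f, g, h, i⟩ := by
  decide +kernel

theorem toZMod_eq_zero_iff' (x : ℤ_[2]) : PadicInt.toZMod x = 0 ↔ ‖x‖ < 1 := by
  rw [← RingHom.mem_ker, PadicInt.ker_toZMod, PadicInt.maximalIdeal_eq_span_p,
    PadicInt.norm_lt_one_iff_dvd, Ideal.mem_span_singleton]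

theorem toZMod_unit (x : ℤ_[2]) : IsUnit x ↔ PadicInt.toZMod x = 1 := by
  have h1 : PadicInt.toZMod x = 0 ∨ PadicInt.toZMod x = 1 := by
    generalize PadicInt.toZMod x = y
    revert y; decide
  rw [PadicInt.isUnit_iff]
  have h2 := toZMod_eq_zero_iff' x
  have h3 := PadicInt.norm_le_one x
  constructor
  · intro h
    rcases h1 with h1 | h1
    · have := h2.1 h1; linarith
    · exact h1
  · intro h
    rw [h] at h2
    by_contra hne
    exact one_ne_zero (h2.2 (lt_of_le_of_ne h3 hne))

theorem exists_alpha : ∃ α : ℤ_[2], α ^ 2 + α + 2 = 0 ∧ PadicInt.toZMod α = 0 := by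
  have h := hensels_lemma (p := 2) (R := ℤ_[2])
    (F := (Polynomial.X ^ 2 + Polynomial.X + 2 : Polynomial ℤ_[2])) (a := 0) (by
      have h2 : ‖(2 : ℤ_[2])‖ < 1 := by
        rw [← toZMod_eq_zero_iff', map_ofNat]; rfl
      simpa using h2)
  obtain ⟨z, hz, hz2, -⟩ := h
  refine ⟨z, by simpa using hz, ?_⟩
  rw [toZMod_eq_zero_iff']
  simpa using hz2

theorem exists_cbrt (u : ℤ_[2]) (hu : IsUnit u) : ∃ l : ℤ_[2], l ^ 3 = u := by
  have hu1 := (toZMod_unit u).1 hu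
  have h3 : ‖(3 : ℤ_[2])‖ = 1 := by
    rw [← PadicInt.isUnit_iff, toZMod_unit, map_ofNat]; rfl
  have hlt : ‖1 - u‖ < 1 := by
    rw [← toZMod_eq_zero_iff', map_sub, hu1, map_one, sub_self]
  have h := hensels_lemma (p := 2) (R := ℤ_[2])
    (F := (Polynomial.X ^ 3 - Polynomial.C u : Polynomial ℤ_[2])) (a := 1) (by
      have h21 : (2 + 1 : ℤ_[2]) = 3 := by norm_num
      simp [h21, h3, hlt])
  obtain ⟨z, hz, -⟩ := h
  refine ⟨z, ?_⟩
  simpa [sub_eq_zero] using hz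

/-- entry of `𝔽₂` as a boolean -/
def toB (x : ZMod 2) : Bool := decide (x = 1)

theorem toB_add (x y : ZMod 2) : toB (x + y) = xor (toB x) (toB y) := by
  revert x y; decide

theorem toB_mul (x y : ZMod 2) : toB (x * y) = and (toB x) (toB y) := by
  revert x y; decide

theorem toB_sub (x y : ZMod 2) : toB (x - y) = xor (toB x) (toB y) := by
  revert x y; decide

theorem toB_inj {x y : ZMod 2} : toB x = toB y → x = y := by
  revert x y; decide

/-- boolean encoding of a matrix over `𝔽₂` -/
def enc (g : SL3F2) : M9 Bool :=
  ⟨toB (g.1 0 0), toB (g.1 0 1), toB (g.1 0 2), toB (g.1 1 0), toB (g.1 1 1), toB (g.1 1 2),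
    toB (g.1 2 0), toB (g.1 2 1), toB (g.1 2 2)⟩

theorem enc_mul (g h : SL3F2) : enc (g * h) = mulB (enc g) (enc h) := by
  simp only [enc, mulB, M9.mul, Matrix.SpecialLinearGroup.coe_mul, Matrix.mul_apply,
    Fin.sum_univ_three, toB_add, toB_mul]

theorem enc_inj {g h : SL3F2} (H : enc g = enc h) : g = h := by
  simp only [enc, M9.mk.injEq] at H
  obtain ⟨h1, h2, h3, h4, h5, h6, h7, h8, h9⟩ := H
  ext i j
  fin_cases i <;> fin_cases j <;> apply toB_inj <;> assumption

theorem enc_det (g : SL3F2) : detB (enc g) = true := by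
  have h : toB (g.1.det) = true := by rw [g.2]; decide
  rw [Matrix.det_fin_three] at h
  simp only [toB_add, toB_mul, toB_sub] at h
  simp only [detB, enc]
  revert h
  generalize toB (g.1 0 0) = a
  generalize toB (g.1 0 1) = b
  generalize toB (g.1 0 2) = c
  generalize toB (g.1 1 0) = d
  generalize toB (g.1 1 1) = e
  generalize toB (g.1 1 2) = f
  generalize toB (g.1 2 0) = g'
  generalize toB (g.1 2 1) = h
  generalize toB (g.1 2 2) = i
  revert a b c d e f g' h i
  decide

/-- `m` is the code of an element of `K` -/
def CodeIn (K : Submonoid SL3F2) (m : M9 Bool) : Prop := ∃ s ∈ K, enc s = m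

theorem CodeIn.mul {K : Submonoid SL3F2} {m n : M9 Bool} (hm : CodeIn K m) (hn : CodeIn K n) :
    CodeIn K (mulB m n) := by
  obtain ⟨s, hs, rfl⟩ := hm
  obtain ⟨t, ht, rfl⟩ := hn
  exact ⟨s * t, K.mul_mem hs ht, enc_mul s t⟩

theorem CodeIn.it {K : Submonoid SL3F2} {m n : M9 Bool} (hm : CodeIn K m) (hn : CodeIn K n)
    (k : ℕ) : CodeIn K (M9.it mulB m k n) := by
  induction k with
  | zero => exact hn
  | succ k ih => exact hm.mul ih

theorem CodeIn.one (K : Submonoid SL3F2) : CodeIn K oneB := ⟨1, K.one_mem, by decide⟩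

theorem CodeIn.mem {K : Submonoid SL3F2} {s : SL3F2} (h : CodeIn K (enc s)) : s ∈ K := by
  obtain ⟨t, ht, h⟩ := h
  rwa [← enc_inj h]

def sF : SL3F2 := ⟨!![0, 0, 1; 1, 0, 1; 0, 1, 0], by decide⟩
def dF : SL3F2 := ⟨!![0, 0, 1; 0, 1, 0; 1, 0, 0], by decide⟩

/-- `sF` and `dF` generate `SL₃(𝔽₂)`. -/
theorem gen_top (K : Submonoid SL3F2) (hs : sF ∈ K) (hd : dF ∈ K) (g : SL3F2) : g ∈ K := by
  have S : CodeIn K sB := ⟨sF, hs, by decide⟩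
  have D : CodeIn K dB := ⟨dF, hd, by decide⟩
  have one := CodeIn.one K
  have word : ∀ l : List Bool, CodeIn K (l.foldr (fun b m => mulB (if b then sB else dB) m) oneB) := by
    intro l
    induction l with
    | nil => exact one
    | cons b l ih =>
      cases b
      · exact D.mul ih
      · exact S.mul ih
  have C : CodeIn K cB := by
    have := word [false, true, false, true, true, true, false, true, true, true, false]
    rwa [show List.foldr _ _ _ = cB by decide] at this
  have U12 : CodeIn K u12B := by
    have := word [true, true, false, true, false, true, false]
    rwa [show List.foldr _ _ _ = u12B by decide] at this
  have U13 : CodeIn K u13B := by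
    have := word [false, true, true, true, false, true, true, true, true, false]
    rwa [show List.foldr _ _ _ = u13B by decide] at this
  have U23 : CodeIn K u23B := by
    have := word [true, true, false, true, true, true, true, true]
    rwa [show List.foldr _ _ _ = u23B by decide] at this
  apply CodeIn.mem
  have h := (check_all _ _ _ _ _ _ _ _ _ (enc_det g)).2.2.2
  rw [show enc g = _ from h.symm]
  exact S.it (C.it (U23.it (U12.it (U13.it one _) _) _) _) _

section Evaluation

variable (α : ℤ_[2])

/-- evaluation of `ℤ[α]` in `ℤ₂` -/
noncomputable def evQ (q : QO) : ℤ_[2] := (q.x : ℤ_[2]) + (q.y : ℤ_[2]) * α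

noncomputable def toM (m : M9 QO) : Matrix (Fin 3) (Fin 3) ℤ_[2] :=
  !![evQ α m.a, evQ α m.b, evQ α m.c; evQ α m.d, evQ α m.e, evQ α m.f;
    evQ α m.g, evQ α m.h, evQ α m.i]

theorem evQ_add (p q : QO) : evQ α (QO.add p q) = evQ α p + evQ α q := by
  have h1 : (QO.add p q).x = p.x + q.x := rfl
  have h2 : (QO.add p q).y = p.y + q.y := rfl
  rw [evQ, evQ, evQ, h1, h2]
  push_cast
  ring

variable {α}

theorem evQ_mul (hα : α ^ 2 + α + 2 = 0) (p q : QO) :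
    evQ α (QO.mul p q) = evQ α p * evQ α q := by
  have h1 : (QO.mul p q).x = p.x * q.x - 2 * (p.y * q.y) := rfl
  have h2 : (QO.mul p q).y = p.x * q.y + p.y * q.x - p.y * q.y := rfl
  rw [evQ, evQ, evQ, h1, h2]
  push_cast
  linear_combination (-(p.y : ℤ_[2]) * q.y) * hα

theorem toM_mul (hα : α ^ 2 + α + 2 = 0) (m n : M9 QO) :
    toM α (mulO m n) = toM α m * toM α n := by
  ext i j
  rw [Matrix.mul_apply, Fin.sum_univ_three]
  fin_cases i <;> fin_cases j <;> simp [toM, mulO, M9.mul, evQ_add, evQ_mul hα]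

theorem evQ_red (hα : PadicInt.toZMod α = 0) (q : QO) :
    toB (PadicInt.toZMod (evQ α q)) = redO q := by
  rw [evQ, map_add, map_mul, hα, mul_zero, add_zero, map_intCast, toB, redO]
  have : ((q.x : ZMod 2) = 1) ↔ q.x % 2 = 1 := by
    rw [show (1 : ZMod 2) = ((1 : ℤ) : ZMod 2) by simp, ZMod.intCast_eq_intCast_iff']
    simp
  rw [decide_eq_decide.2 this]
  rfl

theorem enc_red (hα : PadicInt.toZMod α = 0) (X : SL3Z2) (m : M9 QO) (h : X.1 = toM α m) :
    enc (redMod2 X) = M9.map redO m := by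
  have hX : ∀ i j, (redMod2 X).1 i j = PadicInt.toZMod (toM α m i j) := by
    intro i j
    rw [← h]
    rfl
  simp only [enc, hX, M9.map, ← evQ_red hα]
  rfl

end Evaluation

/-- The lift of the identity to `SL₃(ℤ₂)`. -/
theorem exists_rho : ∃ ρ : SL3F2 →* SL3Z2, ∀ g, redMod2 (ρ g) = g := by
  obtain ⟨α, hα, hα0⟩ := exists_alpha
  let r : SL3F2 → Matrix (Fin 3) (Fin 3) ℤ_[2] := fun g => toM α (lift9 (enc g))
  let K : Submonoid SL3F2 :=
    { carrier := {s | ∃ A : Matrix (Fin 3) (Fin 3) ℤ_[2], A.det = 1 ∧ ∀ g, r (s * g) = A * r g}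
      one_mem' := ⟨1, by simp, by simp⟩
      mul_mem' := by
        rintro s t ⟨A, hA, hA'⟩ ⟨B, hB, hB'⟩
        refine ⟨A * B, by rw [Matrix.det_mul, hA, hB, one_mul], fun g => ?_⟩
        rw [mul_assoc, hA', hB', Matrix.mul_assoc] }
  have hs : sF ∈ K := by
    refine ⟨toM α sO, ?_, fun g => ?_⟩
    · simp [toM, sO, evQ, Matrix.det_fin_three]
    · have h := (check_all _ _ _ _ _ _ _ _ _ (enc_det g)).1
      change toM α (lift9 (enc (sF * g))) = _
      rw [enc_mul, ← toM_mul hα, show enc sF = sB by decide]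
      exact congrArg (toM α) h
  have hd : dF ∈ K := by
    refine ⟨toM α dO, ?_, fun g => ?_⟩
    · simp [toM, dO, evQ, Matrix.det_fin_three]
    · have h := (check_all _ _ _ _ _ _ _ _ _ (enc_det g)).2.1
      change toM α (lift9 (enc (dF * g))) = _
      rw [enc_mul, ← toM_mul hα, show enc dF = dB by decide]
      exact congrArg (toM α) h
  have r1 : r 1 = 1 := by
    change toM α (lift9 (enc 1)) = 1
    rw [show enc 1 = oneB by decide, show lift9 oneB = oneO by decide +kernel]
    ext i j
    fin_cases i <;> fin_cases j <;> simp [toM, oneO, evQ]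
  have key : ∀ s, (r s).det = 1 ∧ ∀ g, r (s * g) = r s * r g := by
    intro s
    obtain ⟨A, hA, hA'⟩ := gen_top K hs hd s
    have : r s = A := by
      have := hA' 1
      rwa [mul_one, r1, Matrix.mul_one] at this
    rw [this]
    exact ⟨hA, hA'⟩
  refine ⟨⟨⟨fun g => ⟨r g, (key g).1⟩, Subtype.ext r1⟩, fun s g => Subtype.ext ((key s).2 g)⟩, ?_⟩
  intro g
  apply enc_inj
  have h := (check_all _ _ _ _ _ _ _ _ _ (enc_det g)).2.2.1
  exact (enc_red hα0 _ _ rfl).trans h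

theorem redMod2_apply (X : SL3Z2) (i j : Fin 3) :
    (redMod2 X).1 i j = PadicInt.toZMod (X.1 i j) := rfl

/-- Entries of the matrices in the normal form are forced by the relations of `S₄`. -/
theorem normal_entries (A B R H : SL3Z2)
    (hAA : A * A = 1) (hBB : B * B = 1) (hAB : A * B = B * A) (hRA : R * A = B * R)
    (hRB : R * B = A * B * R) (hHH : H * H = 1) (hHA : H * A = A * H)
    (hHB : H * B = A * B * H) (hRHR : R * H * R = H)
    (A0 : A.1 0 0 = 0) (A1 : A.1 1 0 = 1) (A2 : A.1 2 0 = 0)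
    (B0 : B.1 0 0 = 0) (B1 : B.1 1 0 = 0) (B2 : B.1 2 0 = 1)
    (R0 : R.1 0 0 = 1) (R1 : R.1 1 0 = 0) (R2 : R.1 2 0 = 0) :
    A.1 = !![0, 1, -1; 1, 0, -1; 0, 0, -1] ∧ R.1 = !![1, 0, -1; 0, 0, -1; 0, 1, -1] ∧
    H.1 = !![-1, 0, 1; 0, -1, 1; 0, 0, 1] := by
  have E : ∀ {X Y : SL3Z2}, X = Y → ∀ i j, X.1 i j = Y.1 i j := by
    rintro X Y rfl i j; rfl
  have P : ∀ (X Y : SL3Z2) (i j : Fin 3),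
      (X * Y).1 i j = X.1 i 0 * Y.1 0 j + X.1 i 1 * Y.1 1 j + X.1 i 2 * Y.1 2 j := by
    intro X Y i j
    change (X.1 * Y.1) i j = _
    rw [Matrix.mul_apply, Fin.sum_univ_three]
  have one00 : (1 : SL3Z2).1 0 0 = 1 := rfl
  have one10 : (1 : SL3Z2).1 1 0 = 0 := rfl
  have one20 : (1 : SL3Z2).1 2 0 = 0 := rfl
  have one02 : (1 : SL3Z2).1 0 2 = 0 := rfl
  -- second column of `A`, third column of `B`
  have cA : ∀ i, A.1 i 1 = (1 : SL3Z2).1 i 0 := fun i => by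
    have := E hAA i 0
    rw [P, A0, A1, A2] at this
    linear_combination this
  have cB : ∀ i, B.1 i 2 = (1 : SL3Z2).1 i 0 := fun i => by
    have := E hBB i 0
    rw [P, B0, B1, B2] at this
    linear_combination this
  have cAB : ∀ i, B.1 i 1 = A.1 i 2 := fun i => by
    have := E hAB i 0
    rw [P, P, B0, B1, B2, A0, A1, A2] at this
    linear_combination -this
  have cRA : ∀ i, R.1 i 1 = B.1 i 0 := fun i => by
    have := E hRA i 0
    rw [P, P, A0, A1, A2, R0, R1, R2] at this
    linear_combination this
  have cRB : ∀ i, R.1 i 2 = A.1 i 2 := fun i => by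
    have := E hRB i 0
    rw [P, P, P, P, P, B0, B1, B2, R0, R1, R2] at this
    linear_combination this
  have hm : A.1 1 2 = -1 := by
    have dR := R.2
    rw [Matrix.det_fin_three] at dR
    rw [R0, R1, R2, cRA, cRA, cRA, cRB, cRB, cRB, B0, B1, B2] at dR
    linear_combination -dR
  have hn : A.1 2 2 = -1 := by
    have := E hRA 1 2
    rw [P, P, R1, cRA, cRB, cRB, cRB, cAB, cB, B1, hm, one10] at this
    linear_combination -this
  have hl : A.1 0 2 = -1 := by
    have := E hAA 0 2
    rw [P, A0, cA, hm, hn, one00, one02] at this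
    linear_combination -this
  -- the matrix `H`
  have hq : H.1 1 0 = 0 ∧ H.1 2 0 = 0 := by
    have h0 := E hRHR 0 0
    have h1 := E hRHR 1 0
    rw [P, R0, R1, R2, P] at h0 h1
    rw [R0, cRA, cRB, B0, hl] at h0
    rw [R1, cRA, cRB, B1, hm] at h1
    have hs : H.1 2 0 = 0 := by linear_combination -h0
    rw [hs] at h1
    exact ⟨by linear_combination -h1, hs⟩
  obtain ⟨H1, H2⟩ := hq
  have cH1 : ∀ i, H.1 i 1 = A.1 i 0 * H.1 0 0 := fun i => by
    have := E hHA i 0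
    rw [P, P, A0, A1, A2, H1, H2] at this
    linear_combination this
  have cH2 : ∀ i, H.1 i 2 = A.1 i 2 * H.1 0 0 := fun i => by
    have := E hHB i 0
    rw [P, P, P, P, P, B0, B1, B2, H1, H2] at this
    linear_combination this
  have hp : H.1 0 0 = -1 := by
    have h2 := E hHH 0 0
    rw [P, H1, H2, one00] at h2
    have dH := H.2
    rw [Matrix.det_fin_three] at dH
    rw [H1, H2, cH1, cH1, cH1, cH2, cH2, cH2, A0, A1, A2, hl, hm, hn] at dH
    linear_combination -dH - H.1 0 0 * h2
  refine ⟨?_, ?_, ?_⟩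
  · ext i j
    fin_cases i <;> fin_cases j <;> simp [A0, A1, A2, cA, hl, hm, hn]
  · ext i j
    fin_cases i <;> fin_cases j <;> simp [R0, R1, R2, cRA, cRB, B0, B1, B2, hl, hm, hn]
  · ext i j
    fin_cases i <;> fin_cases j <;> simp [hp, H1, H2, cH1, cH2, A0, A1, A2, hl, hm, hn]

theorem normal_form (A B R H : SL3Z2) (N : SL3F2)
    (hAA : A * A = 1) (hBB : B * B = 1) (hAB : A * B = B * A) (hRA : R * A = B * R)
    (hRB : R * B = A * B * R) (hRRR : R * R * R = 1) (hHH : H * H = 1) (hHA : H * A = A * H)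
    (hHB : H * B = A * B * H) (hRHR : R * H * R = H)
    (nA : ∀ i, (redMod2 A * N).1 i 0 = N.1 i 1)
    (nB : ∀ i, (redMod2 B * N).1 i 0 = N.1 i 2)
    (nR : ∀ i, (redMod2 R * N).1 i 0 = N.1 i 0) :
    ∃ M : SL3Z2, redMod2 M = N ∧
      (M⁻¹ * A * M).1 = !![0, 1, -1; 1, 0, -1; 0, 0, -1] ∧
      (M⁻¹ * R * M).1 = !![1, 0, -1; 0, 0, -1; 0, 1, -1] ∧
      (M⁻¹ * H * M).1 = !![-1, 0, 1; 0, -1, 1; 0, 0, 1] := by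
  have hsurj := ZMod.ringHom_surjective (PadicInt.toZMod (p := 2))
  choose v hv using fun i => hsurj (N.1 i 0)
  -- an `R`-fixed vector lifting the first column of `N`
  let y : Fin 3 → ℤ_[2] := v + R.1 *ᵥ v + R.1 *ᵥ (R.1 *ᵥ v)
  have hRy : R.1 *ᵥ y = y := by
    have h3 : R.1 *ᵥ (R.1 *ᵥ (R.1 *ᵥ v)) = v := by
      have : R.1 * R.1 * R.1 = 1 := congrArg Subtype.val hRRR
      rw [Matrix.mulVec_mulVec, Matrix.mulVec_mulVec, this, Matrix.one_mulVec]
    simp only [y, Matrix.mulVec_add, h3]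
    abel
  have redvec : ∀ (X : SL3Z2) (w : Fin 3 → ℤ_[2]) (i : Fin 3),
      PadicInt.toZMod ((X.1 *ᵥ w) i) =
        ((redMod2 X).1 *ᵥ (fun j => PadicInt.toZMod (w j))) i := by
    intro X w i
    simp only [Matrix.mulVec, dotProduct, map_sum, map_mul]
    rfl
  have hy : ∀ i, PadicInt.toZMod (y i) = N.1 i 0 := by
    have e1 : (fun j => PadicInt.toZMod (v j)) = fun j => N.1 j 0 := funext hv
    have e2 : ∀ i, PadicInt.toZMod ((R.1 *ᵥ v) i) = N.1 i 0 := by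
      intro i
      rw [redvec, e1]
      exact nR i
    have e3 : ∀ i, PadicInt.toZMod ((R.1 *ᵥ (R.1 *ᵥ v)) i) = N.1 i 0 := by
      intro i
      rw [redvec, funext e2]
      exact nR i
    intro i
    simp only [y, Pi.add_apply, map_add, hv, e2, e3]
    generalize N.1 i 0 = t
    revert t; decide
  have hAy : ∀ i, PadicInt.toZMod ((A.1 *ᵥ y) i) = N.1 i 1 := by
    intro i
    rw [redvec, funext hy]
    exact nA i
  have hBy : ∀ i, PadicInt.toZMod ((B.1 *ᵥ y) i) = N.1 i 2 := by
    intro i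
    rw [redvec, funext hy]
    exact nB i
  let Y : Matrix (Fin 3) (Fin 3) ℤ_[2] := Matrix.of fun i j => ![y i, (A.1 *ᵥ y) i, (B.1 *ᵥ y) i] j
  have hYN : ∀ i j, PadicInt.toZMod (Y i j) = N.1 i j := by
    intro i j
    fin_cases j
    · exact hy i
    · exact hAy i
    · exact hBy i
  have hdet : PadicInt.toZMod Y.det = 1 := by
    rw [RingHom.map_det, ← N.2]
    congr 1
    ext i j
    exact hYN i j
  obtain ⟨u, hu⟩ := (toZMod_unit _).2 hdet
  obtain ⟨l, hl⟩ := exists_cbrt (↑u⁻¹ : ℤ_[2]) (Units.isUnit _)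
  have hlu : PadicInt.toZMod l = 1 := by
    rw [← toZMod_unit]
    have : IsUnit (l ^ 3) := by rw [hl]; exact Units.isUnit _
    exact (isUnit_pow_iff (by norm_num)).1 this
  let M : SL3Z2 := ⟨l • Y, by
    rw [Matrix.det_smul, Fintype.card_fin, hl, ← hu, Units.inv_mul]⟩
  have hM0 : ∀ i, M.1 i 0 = l * y i := fun i => rfl
  have hM1 : ∀ i, M.1 i 1 = l * (A.1 *ᵥ y) i := fun i => rfl
  have hM2 : ∀ i, M.1 i 2 = l * (B.1 *ᵥ y) i := fun i => rfl
  have hcol : ∀ (X : SL3Z2) (i : Fin 3), (X * M).1 i 0 = l * (X.1 *ᵥ y) i := by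
    intro X i
    simp only [Matrix.SpecialLinearGroup.coe_mul, Matrix.mul_apply, Matrix.mulVec, dotProduct,
      Fin.sum_univ_three, hM0]
    ring
  have hconj : ∀ (X : SL3Z2) (k : Fin 3), (∀ i, (X * M).1 i 0 = M.1 i k) →
      ∀ i, (M⁻¹ * X * M).1 i 0 = (1 : Matrix (Fin 3) (Fin 3) ℤ_[2]) i k := by
    intro X k hX i
    have h1 : (M⁻¹ * M).1 i k = (1 : Matrix (Fin 3) (Fin 3) ℤ_[2]) i k := by
      rw [inv_mul_cancel]; rfl
    rw [← h1, mul_assoc]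
    change ∑ j, (M⁻¹).1 i j * (X * M).1 j 0 = ∑ j, (M⁻¹).1 i j * M.1 j k
    exact Finset.sum_congr rfl fun j _ => by rw [hX j]
  have cA := hconj A 1 fun i => by rw [hcol, hM1]
  have cB := hconj B 2 fun i => by rw [hcol, hM2]
  have cR := hconj R 0 fun i => by rw [hcol, hM0, hRy]
  refine ⟨M, ?_, ?_⟩
  · ext i j
    change PadicInt.toZMod (l * Y i j) = _
    rw [map_mul, hlu, one_mul, hYN]
  · have cj : ∀ X Y : SL3Z2, (M⁻¹ * X * M) * (M⁻¹ * Y * M) = M⁻¹ * (X * Y) * M := by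
      intro X Y; group
    apply normal_entries (M⁻¹ * A * M) (M⁻¹ * B * M) (M⁻¹ * R * M) (M⁻¹ * H * M)
    · rw [cj, hAA]; group
    · rw [cj, hBB]; group
    · rw [cj, cj, hAB]
    · rw [cj, cj, hRA]
    · rw [cj, cj, cj, hRB]
    · rw [cj, hHH]; group
    · rw [cj, cj, hHA]
    · rw [cj, cj, cj, hHB]
    · rw [cj, cj, hRHR]
    · exact cA 0
    · exact cA 1
    · exact cA 2
    · exact cB 0
    · exact cB 1
    · exact cB 2
    · exact cR 0
    · exact cR 1
    · exact cR 2

/-- Two lifts of the same representation of `S₄` are conjugate by a matrix congruent to `1`. -/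
theorem uniq {T : Type} [Group T] (ι : T →* SL3F2) (a b r h : T) (N : SL3F2)
    (hAA : a * a = 1) (hBB : b * b = 1) (hAB : a * b = b * a) (hRA : r * a = b * r)
    (hRB : r * b = a * b * r) (hRRR : r * r * r = 1) (hHH : h * h = 1) (hHA : h * a = a * h)
    (hHB : h * b = a * b * h) (hRHR : r * h * r = h)
    (nA : ∀ i, (ι a * N).1 i 0 = N.1 i 1)
    (nB : ∀ i, (ι b * N).1 i 0 = N.1 i 2)
    (nR : ∀ i, (ι r * N).1 i 0 = N.1 i 0)
    (gen : ∀ K : Submonoid T, a ∈ K → r ∈ K → h ∈ K → ∀ g, g ∈ K)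
    (μ ν : T →* SL3Z2) (hμ : ∀ g, redMod2 (μ g) = ι g) (hν : ∀ g, redMod2 (ν g) = ι g) :
    ∃ P : SL3Z2, redMod2 P = 1 ∧ ∀ g, μ g = P * ν g * P⁻¹ := by
  have nf : ∀ μ : T →* SL3Z2, (∀ g, redMod2 (μ g) = ι g) → ∃ M : SL3Z2, redMod2 M = N ∧
      (M⁻¹ * μ a * M).1 = !![0, 1, -1; 1, 0, -1; 0, 0, -1] ∧
      (M⁻¹ * μ r * M).1 = !![1, 0, -1; 0, 0, -1; 0, 1, -1] ∧
      (M⁻¹ * μ h * M).1 = !![-1, 0, 1; 0, -1, 1; 0, 0, 1] := by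
    intro μ hμ
    apply normal_form (μ a) (μ b) (μ r) (μ h) N
    · rw [← map_mul, hAA, map_one]
    · rw [← map_mul, hBB, map_one]
    · rw [← map_mul, hAB, map_mul]
    · rw [← map_mul, hRA, map_mul]
    · rw [← map_mul, hRB, map_mul, map_mul]
    · rw [← map_mul, ← map_mul, hRRR, map_one]
    · rw [← map_mul, hHH, map_one]
    · rw [← map_mul, hHA, map_mul]
    · rw [← map_mul, hHB, map_mul, map_mul]
    · rw [← map_mul, ← map_mul, hRHR]
    · rw [hμ]; exact nA
    · rw [hμ]; exact nB
    · rw [hμ]; exact nR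
  obtain ⟨M, hM, ma, mr, mh⟩ := nf μ hμ
  obtain ⟨L, hL, la, lr, lh⟩ := nf ν hν
  have tr : ∀ g, M⁻¹ * μ g * M = L⁻¹ * ν g * L →
      μ g = (M * L⁻¹) * ν g * (M * L⁻¹)⁻¹ := by
    intro g hg
    have : μ g = M * (M⁻¹ * μ g * M) * M⁻¹ := by group
    rw [this, hg]
    group
  refine ⟨M * L⁻¹, by rw [map_mul, map_inv, hM, hL, mul_inv_cancel], ?_⟩
  let K : Submonoid T :=
    { carrier := {g | μ g = (M * L⁻¹) * ν g * (M * L⁻¹)⁻¹}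
      one_mem' := by simp
      mul_mem' := by
        intro x y hx hy
        simp only [Set.mem_setOf_eq] at hx hy ⊢
        rw [map_mul, map_mul, hx, hy]
        group }
  exact gen K (tr a (Subtype.ext (ma.trans la.symm))) (tr r (Subtype.ext (mr.trans lr.symm)))
    (tr h (Subtype.ext (mh.trans lh.symm)))

/-- inverse transpose -/
def invT (R : Type) [CommRing R] : Matrix.SpecialLinearGroup (Fin 3) R →*
    Matrix.SpecialLinearGroup (Fin 3) R where
  toFun g := (g⁻¹).transpose
  map_one' := by
    apply Subtype.ext
    simp
  map_mul' x y := by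
    apply Subtype.ext
    rw [_root_.mul_inv_rev]
    simp [Matrix.transpose_mul]

theorem invT_invT (R : Type) [CommRing R] (g : Matrix.SpecialLinearGroup (Fin 3) R) :
    invT R (invT R g) = g := by
  have h : ∀ x : Matrix.SpecialLinearGroup (Fin 3) R, x.transpose⁻¹ = (x⁻¹).transpose := by
    intro x
    rw [inv_eq_iff_mul_eq_one]
    apply Subtype.ext
    have : (x⁻¹ * x).1 = 1 := by rw [inv_mul_cancel]; rfl
    change x.1.transpose * (x⁻¹).1.transpose = 1
    rw [← Matrix.transpose_mul]
    change ((x⁻¹ * x).1).transpose = 1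
    rw [this, Matrix.transpose_one]
  change ((g⁻¹).transpose⁻¹).transpose = g
  rw [h, inv_inv]
  apply Subtype.ext
  exact Matrix.transpose_transpose _

theorem redMod2_invT (X : SL3Z2) : redMod2 (invT _ X) = invT _ (redMod2 X) := by
  change redMod2 ((X⁻¹).transpose) = ((redMod2 X)⁻¹).transpose
  rw [← map_inv]
  rfl

def a2 : SL3F2 := ⟨!![1, 0, 1; 0, 1, 0; 0, 0, 1], by decide⟩
def b2 : SL3F2 := ⟨!![1, 0, 0; 0, 1, 1; 0, 0, 1], by decide⟩
def r2 : SL3F2 := ⟨!![0, 1, 0; 1, 1, 0; 0, 0, 1], by decide⟩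
def h2 : SL3F2 := ⟨!![1, 1, 0; 0, 1, 0; 0, 0, 1], by decide⟩
def n2 : SL3F2 := ⟨!![0, 1, 0; 0, 0, 1; 1, 1, 1], by decide⟩

def a1 : SL3F2 := ⟨!![1, 1, 0; 0, 1, 0; 0, 0, 1], by decide⟩
def b1 : SL3F2 := ⟨!![1, 0, 1; 0, 1, 0; 0, 0, 1], by decide⟩
def r1 : SL3F2 := ⟨!![1, 0, 0; 0, 1, 1; 0, 1, 0], by decide⟩
def h1 : SL3F2 := ⟨!![1, 0, 0; 0, 1, 0; 0, 1, 1], by decide⟩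
def n1 : SL3F2 := ⟨!![1, 1, 1; 0, 1, 0; 0, 0, 1], by decide⟩

theorem words2 : ∀ a b c d e f i : Bool, detB ⟨a, b, c, d, e, f, false, false, i⟩ = true →
    ∃ j k x y : Fin 3, (⟨a, b, c, d, e, f, false, false, i⟩ : M9 Bool) =
      M9.it mulB (enc a2) x (M9.it mulB (enc r2) y (M9.it mulB (enc a2) j
        (M9.it mulB (enc r2) k (M9.it mulB (enc h2) 0 oneB)))) ∨
      (⟨a, b, c, d, e, f, false, false, i⟩ : M9 Bool) =
      M9.it mulB (enc a2) x (M9.it mulB (enc r2) y (M9.it mulB (enc a2) j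
        (M9.it mulB (enc r2) k (M9.it mulB (enc h2) 1 oneB)))) := by
  decide +kernel

theorem words1 : ∀ a b c e f h i : Bool, detB ⟨a, b, c, false, e, f, false, h, i⟩ = true →
    ∃ j k x y : Fin 3, (⟨a, b, c, false, e, f, false, h, i⟩ : M9 Bool) =
      M9.it mulB (enc a1) x (M9.it mulB (enc r1) y (M9.it mulB (enc a1) j
        (M9.it mulB (enc r1) k (M9.it mulB (enc h1) 0 oneB)))) ∨
      (⟨a, b, c, false, e, f, false, h, i⟩ : M9 Bool) =
      M9.it mulB (enc a1) x (M9.it mulB (enc r1) y (M9.it mulB (enc a1) j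
        (M9.it mulB (enc r1) k (M9.it mulB (enc h1) 1 oneB)))) := by
  decide +kernel

theorem gen2 (K : Submonoid SL3F2) (ha : a2 ∈ K) (hr : r2 ∈ K) (hh : h2 ∈ K) (g : SL3F2)
    (hg : g ∈ T2) : g ∈ K := by
  have A : CodeIn K (enc a2) := ⟨_, ha, rfl⟩
  have R : CodeIn K (enc r2) := ⟨_, hr, rfl⟩
  have H : CodeIn K (enc h2) := ⟨_, hh, rfl⟩
  obtain ⟨z1, z2⟩ : g.1 2 0 = 0 ∧ g.1 2 1 = 0 := hg
  have hz : enc g = ⟨toB (g.1 0 0), toB (g.1 0 1), toB (g.1 0 2), toB (g.1 1 0), toB (g.1 1 1),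
      toB (g.1 1 2), false, false, toB (g.1 2 2)⟩ := by
    rw [enc, z1, z2]; rfl
  have hd := enc_det g
  rw [hz] at hd
  apply CodeIn.mem
  rw [hz]
  obtain ⟨j, k, x, y, h | h⟩ := words2 _ _ _ _ _ _ _ hd
  · rw [h]; exact A.it (R.it (A.it (R.it (H.it (CodeIn.one K) _) _) _) _) _
  · rw [h]; exact A.it (R.it (A.it (R.it (H.it (CodeIn.one K) _) _) _) _) _

theorem gen1 (K : Submonoid SL3F2) (ha : a1 ∈ K) (hr : r1 ∈ K) (hh : h1 ∈ K) (g : SL3F2)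
    (hg : g ∈ T1) : g ∈ K := by
  have A : CodeIn K (enc a1) := ⟨_, ha, rfl⟩
  have R : CodeIn K (enc r1) := ⟨_, hr, rfl⟩
  have H : CodeIn K (enc h1) := ⟨_, hh, rfl⟩
  obtain ⟨z1, z2⟩ : g.1 1 0 = 0 ∧ g.1 2 0 = 0 := hg
  have hz : enc g = ⟨toB (g.1 0 0), toB (g.1 0 1), toB (g.1 0 2), false, toB (g.1 1 1),
      toB (g.1 1 2), false, toB (g.1 2 1), toB (g.1 2 2)⟩ := by
    rw [enc, z1, z2]; rfl
  have hd := enc_det g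
  rw [hz] at hd
  apply CodeIn.mem
  rw [hz]
  obtain ⟨j, k, x, y, h | h⟩ := words1 _ _ _ _ _ _ _ hd
  · rw [h]; exact A.it (R.it (A.it (R.it (H.it (CodeIn.one K) _) _) _) _) _
  · rw [h]; exact A.it (R.it (A.it (R.it (H.it (CodeIn.one K) _) _) _) _) _

theorem sub_gen {T : Subgroup SL3F2} (K : Submonoid T) (g : T)
    (hg : (g : SL3F2) ∈ K.map T.subtype) : g ∈ K := by
  obtain ⟨x, hx, hxg⟩ := hg
  rwa [← Subtype.ext hxg]

theorem uniq2 (μ ν : T2 →* SL3Z2) (hμ : ∀ g, redMod2 (μ g) = g) (hν : ∀ g, redMod2 (ν g) = g) :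
    ∃ P : SL3Z2, redMod2 P = 1 ∧ ∀ g, μ g = P * ν g * P⁻¹ := by
  refine uniq T2.subtype ⟨a2, by constructor <;> decide⟩ ⟨b2, by constructor <;> decide⟩
    ⟨r2, by constructor <;> decide⟩ ⟨h2, by constructor <;> decide⟩ n2
    (Subtype.ext (by decide)) (Subtype.ext (by decide)) (Subtype.ext (by decide))
    (Subtype.ext (by decide)) (Subtype.ext (by decide)) (Subtype.ext (by decide))
    (Subtype.ext (by decide)) (Subtype.ext (by decide)) (Subtype.ext (by decide))
    (Subtype.ext (by decide)) (show ∀ i, (a2 * n2).1 i 0 = n2.1 i 1 by decide)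
    (show ∀ i, (b2 * n2).1 i 0 = n2.1 i 2 by decide)
    (show ∀ i, (r2 * n2).1 i 0 = n2.1 i 0 by decide) ?_ μ ν hμ hν
  intro K ha hr hh g
  exact sub_gen K g (gen2 (K.map T2.subtype) ⟨_, ha, rfl⟩ ⟨_, hr, rfl⟩ ⟨_, hh, rfl⟩ g g.2)

theorem uniq1 (μ ν : T1 →* SL3Z2) (hμ : ∀ g, redMod2 (μ g) = g) (hν : ∀ g, redMod2 (ν g) = g) :
    ∃ P : SL3Z2, redMod2 P = 1 ∧ ∀ g, μ g = P * ν g * P⁻¹ := by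
  obtain ⟨P, hP, h⟩ := uniq ((invT _).comp T1.subtype) ⟨a1, by constructor <;> decide⟩
    ⟨b1, by constructor <;> decide⟩
    ⟨r1, by constructor <;> decide⟩ ⟨h1, by constructor <;> decide⟩ n1
    (Subtype.ext (by decide)) (Subtype.ext (by decide)) (Subtype.ext (by decide))
    (Subtype.ext (by decide)) (Subtype.ext (by decide)) (Subtype.ext (by decide))
    (Subtype.ext (by decide)) (Subtype.ext (by decide)) (Subtype.ext (by decide))
    (Subtype.ext (by decide)) (show ∀ i, (invT _ a1 * n1).1 i 0 = n1.1 i 1 by decide)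
    (show ∀ i, (invT _ b1 * n1).1 i 0 = n1.1 i 2 by decide)
    (show ∀ i, (invT _ r1 * n1).1 i 0 = n1.1 i 0 by decide)
    (fun K ha hr hh g => sub_gen K g (gen1 (K.map T1.subtype) ⟨_, ha, rfl⟩ ⟨_, hr, rfl⟩ ⟨_, hh, rfl⟩ g g.2))
    ((invT _).comp μ) ((invT _).comp ν)
    (fun g => by
      change redMod2 (invT _ (μ g)) = invT _ (g : SL3F2)
      rw [redMod2_invT, hμ])
    (fun g => by
      change redMod2 (invT _ (ν g)) = invT _ (g : SL3F2)
      rw [redMod2_invT, hν])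
  refine ⟨invT _ P, by rw [redMod2_invT, hP, map_one], fun g => ?_⟩
  have hg : invT _ (μ g) = P * invT _ (ν g) * P⁻¹ := h g
  rw [← invT_invT _ (μ g), hg, map_mul, map_mul, invT_invT, map_inv]

theorem stmt_0 (μ₁ : T1 →* SL3Z2) (μ₂ : T2 →* SL3Z2)
    (hμ₁ : ∀ g : T1, redMod2 (μ₁ g) = (g : SL3F2))
    (hμ₂ : ∀ g : T2, redMod2 (μ₂ g) = (g : SL3F2))
    (hagree : ∀ (g : SL3F2) (hg1 : g ∈ T1) (hg2 : g ∈ T2),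
      μ₁ ⟨g, hg1⟩ = μ₂ ⟨g, hg2⟩) :
    ∃ (μ : SL3F2 →* SL3Z2) (Z : SL3Z2),
      (∀ g : SL3F2, redMod2 (μ g) = g) ∧
      (∀ (g : SL3F2) (hg1 : g ∈ T1) (hg2 : g ∈ T2),
        Z * μ₁ ⟨g, hg1⟩ = μ₁ ⟨g, hg1⟩ * Z) ∧
      (∀ g : T1, μ (g : SL3F2) = μ₁ g) ∧
      (∀ g : T2, μ (g : SL3F2) = Z * μ₂ g * Z⁻¹) := by
  obtain ⟨ρ, hρ⟩ := exists_rho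
  obtain ⟨P, hP, h1⟩ := uniq1 μ₁ (ρ.comp T1.subtype) hμ₁ (fun g => hρ g)
  obtain ⟨Q, hQ, h2⟩ := uniq2 μ₂ (ρ.comp T2.subtype) hμ₂ (fun g => hρ g)
  have h1' : ∀ g : T1, μ₁ g = P * ρ g * P⁻¹ := h1
  have h2' : ∀ g : T2, μ₂ g = Q * ρ g * Q⁻¹ := h2
  refine ⟨(MulAut.conj P).toMonoidHom.comp ρ, P * Q⁻¹, ?_, ?_, ?_, ?_⟩
  · intro g
    change redMod2 (P * ρ g * P⁻¹) = g
    rw [map_mul, map_mul, map_inv, hP, hρ, one_mul, inv_one, mul_one]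
  · intro g hg1 hg2
    have e1 := h1' ⟨g, hg1⟩
    have e2 := h2' ⟨g, hg2⟩
    have e3 := hagree g hg1 hg2
    have e4 : P * Q⁻¹ * μ₁ ⟨g, hg1⟩ = P * ρ g * P⁻¹ * (P * Q⁻¹) := by
      rw [e3, e2]; group
    rw [e4, e1]
  · intro g
    exact (h1' g).symm
  · intro g
    change P * ρ g * P⁻¹ = _
    rw [h2']
    group
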